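/- arXiv:1108.3585 — 2 statements merged into one kernel-verified Lean document; each statement's English description precedes it below -/
import Mathlib

section
/- Let α, λ > 0 and let X₁ and X₂ be i.i.d. random variables with the gamma distribution with shape α and scale λ. Then the random variable 1/α̂ = S²/X̄² = (X₁ − X₂)²/(X₁ + X₂)² has the Beta distribution with parameters 1/2 and α, i.e., its density on (0,1) is z^{−1/2}(1 − z)^{α−1}/B(1/2, α). -/
/-!
If `X` and `Y` are independent gamma variables of shapes `a`, `b` and the same rate, then
`T = X / (X + Y)` has law `Beta(a, b)`: for fixed `X = x`, the substitution `y = x / t - x` turns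
the joint density of `(X, Y)` into the `Beta(a, b)` density at `t` times a gamma density in `x`,
which integrates to `1`. When `a = b`, the ratio `(X - Y) / (X + Y) = 2T - 1` is symmetric about
`0`, so the law of its square comes from the branch `t = (1 + √z) / 2`, counted twice. The identity
`t (1 - t) = (1 - z) / 4` makes that law a multiple of `Beta(1/2, a)`, and Legendre's duplication
formula identifies the constant.
-/

open MeasureTheory ProbabilityTheory

open Set

lemma measurable_gammaPDF (a r : ℝ) : Measurable (gammaPDF a r) :=
  (measurable_gammaPDFReal a r).ennreal_ofReal

lemma measurable_betaPDF (a b : ℝ) : Measurable (betaPDF a b) :=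
  (measurable_betaPDFReal a b).ennreal_ofReal

lemma gammaMeasure_eq_withDensity_restrict_Ioi (a r : ℝ) :
    gammaMeasure a r = (volume.restrict (Ioi 0)).withDensity (gammaPDF a r) := by
  have hIci : (Ici 0).indicator (gammaPDF a r) = gammaPDF a r :=
    indicator_eq_self.mpr fun x hx => not_lt.mp fun hneg => hx (gammaPDF_of_neg hneg)
  rw [restrict_Ioi_eq_restrict_Ici, ← withDensity_indicator measurableSet_Ici, hIci,
    gammaMeasure]

lemma betaMeasure_eq_withDensity_restrict_Ioo (a b : ℝ) :
    betaMeasure a b = (volume.restrict (Ioo 0 1)).withDensity (betaPDF a b) := by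
  have hIoo : (Ioo 0 1).indicator (betaPDF a b) = betaPDF a b :=
    indicator_eq_self.mpr fun x hx =>
      ⟨not_le.mp fun h => hx (betaPDF_eq_zero_of_nonpos h),
        not_le.mp fun h => hx (betaPDF_eq_zero_of_one_le h)⟩
  rw [← withDensity_indicator measurableSet_Ioo, hIoo, betaMeasure]

lemma lintegral_gammaMeasure (a r : ℝ) {f : ℝ → ENNReal} (hf : Measurable f) :
    ∫⁻ x, f x ∂gammaMeasure a r = ∫⁻ x in Ioi 0, gammaPDF a r x * f x := by
  rw [gammaMeasure_eq_withDensity_restrict_Ioi,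
    lintegral_withDensity_eq_lintegral_mul _ (measurable_gammaPDF a r) hf]
  rfl

lemma lintegral_betaMeasure (a b : ℝ) {f : ℝ → ENNReal} (hf : Measurable f) :
    ∫⁻ x, f x ∂betaMeasure a b = ∫⁻ x in Ioo 0 1, betaPDF a b x * f x := by
  rw [betaMeasure_eq_withDensity_restrict_Ioo,
    lintegral_withDensity_eq_lintegral_mul _ (measurable_betaPDF a b) hf]
  rfl

lemma ae_pos_gammaMeasure (a r : ℝ) : ∀ᵐ x ∂gammaMeasure a r, 0 < x := by
  rw [gammaMeasure_eq_withDensity_restrict_Ioi]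
  exact (withDensity_absolutelyContinuous _ _).ae_le (ae_restrict_mem measurableSet_Ioi)

lemma setLIntegral_Ioi_gammaPDF {a r : ℝ} (ha : 0 < a) (hr : 0 < r) :
    ∫⁻ x in Ioi 0, gammaPDF a r x = 1 := by
  have := isProbabilityMeasure_gammaMeasure ha hr
  simpa using (lintegral_gammaMeasure a r measurable_one).symm

lemma image_div_sub_Ioo {x : ℝ} (hx : 0 < x) : (fun t => x / t - x) '' Ioo 0 1 = Ioi 0 := by
  ext y
  constructor
  · rintro ⟨t, ⟨ht0, ht1⟩, rfl⟩
    exact sub_pos.mpr ((lt_div_iff₀ ht0).mpr (mul_lt_of_lt_one_right hx ht1))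
  · intro (hy : 0 < y)
    refine ⟨x / (x + y), ⟨by positivity, ?_⟩, ?_⟩
    · rw [div_lt_one (by positivity)]
      linarith
    · field_simp
      ring

lemma setLIntegral_Ioi_eq_setLIntegral_Ioo_div_sub {x : ℝ} (hx : 0 < x) (f : ℝ → ENNReal) :
    ∫⁻ y in Ioi 0, f y = ∫⁻ t in Ioo 0 1, ENNReal.ofReal (x / t ^ 2) * f (x / t - x) := by
  have hderiv (t : ℝ) (ht : t ∈ Ioo (0 : ℝ) 1) :
      HasDerivWithinAt (fun t => x / t - x) (-(x / t ^ 2)) (Ioo 0 1) t := by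
    simpa [div_eq_mul_inv] using
      (((hasDerivAt_inv ht.1.ne').const_mul x).sub_const x).hasDerivWithinAt
  have hanti : AntitoneOn (fun t => x / t - x) (Ioo 0 1) := fun s hs t _ hst =>
    sub_le_sub_right (div_le_div_of_nonneg_left hx.le hs.1 hst) x
  rw [← image_div_sub_Ioo hx,
    lintegral_image_eq_lintegral_deriv_mul_of_antitoneOn measurableSet_Ioo hderiv hanti]
  simp only [neg_neg]

lemma lintegral_comp_div_add_gammaMeasure (b r : ℝ) {x : ℝ} (hx : 0 < x)
    {g : ℝ → ENNReal} (hg : Measurable g) :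
    ∫⁻ y, g (x / (x + y)) ∂gammaMeasure b r =
      ∫⁻ t in Ioo 0 1, ENNReal.ofReal (x / t ^ 2) * gammaPDF b r (x / t - x) * g t := by
  rw [lintegral_gammaMeasure b r (by fun_prop), setLIntegral_Ioi_eq_setLIntegral_Ioo_div_sub hx]
  refine setLIntegral_congr_fun measurableSet_Ioo fun t _ => ?_
  have hratio : x / (x + (x / t - x)) = t := by
    rw [add_sub_cancel, div_div_cancel₀ hx.ne']
  simp only [hratio, mul_assoc]

/-- The joint density of `X` and `T = X / (X + Y)`: conditionally on `T = t`, the variable `X` has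
shape `a + b` and rate `r / t`. -/
lemma gammaPDFReal_mul_gammaPDFReal_div_sub {a b r x t : ℝ} (ha : 0 < a) (hb : 0 < b)
    (hr : 0 < r) (hx : 0 < x) (ht : t ∈ Ioo 0 1) :
    gammaPDFReal a r x * (x / t ^ 2 * gammaPDFReal b r (x / t - x)) =
      betaPDFReal a b t * gammaPDFReal (a + b) (r / t) x := by
  obtain ⟨ht0, ht1⟩ := ht
  have h1t : 0 < 1 - t := sub_pos.mpr ht1
  have hy : x / t - x = x * (1 - t) / t := by
    field_simp
  have hexp : Real.exp (-(r * x)) * Real.exp (-(r * (x / t - x))) =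
      Real.exp (-(r / t * x)) := by
    rw [← Real.exp_add]
    ring_nf
  have hΓ : Real.Gamma (a + b) ≠ 0 := (Real.Gamma_pos_of_pos (add_pos ha hb)).ne'
  rw [gammaPDFReal, if_pos hx.le, gammaPDFReal, if_pos (hy ▸ by positivity), gammaPDFReal,
    if_pos hx.le, betaPDFReal, if_pos ⟨ht0, ht1⟩, beta, ← hexp, hy,
    Real.div_rpow (by positivity) ht0.le, Real.mul_rpow hx.le h1t.le,
    Real.div_rpow hr.le ht0.le, Real.rpow_add hr, Real.rpow_add ht0,
    show a + b - 1 = (a - 1) + (b - 1) + 1 by ring, Real.rpow_add_one hx.ne', Real.rpow_add hx,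
    Real.rpow_sub_one ht0.ne', Real.rpow_sub_one ht0.ne']
  field_simp

lemma lintegral_gammaPDF_mul_gammaPDF_div_sub {a b r t : ℝ} (ha : 0 < a) (hb : 0 < b)
    (hr : 0 < r) (ht : t ∈ Ioo 0 1) :
    ∫⁻ x in Ioi 0, gammaPDF a r x * (ENNReal.ofReal (x / t ^ 2) * gammaPDF b r (x / t - x)) =
      betaPDF a b t := by
  calc
    _ = ∫⁻ x in Ioi 0, betaPDF a b t * gammaPDF (a + b) (r / t) x := by
      refine setLIntegral_congr_fun measurableSet_Ioi fun x (hx : 0 < x) => ?_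
      simp only [gammaPDF, betaPDF]
      rw [← ENNReal.ofReal_mul (by positivity),
        ← ENNReal.ofReal_mul (gammaPDFReal_nonneg ha hr x),
        gammaPDFReal_mul_gammaPDFReal_div_sub ha hb hr hx ht,
        ENNReal.ofReal_mul (betaPDFReal_pos ht.1 ht.2 ha hb).le]
    _ = betaPDF a b t := by
      rw [lintegral_const_mul _ (measurable_gammaPDF _ _),
        setLIntegral_Ioi_gammaPDF (add_pos ha hb) (div_pos hr ht.1), mul_one]

theorem map_div_add_prod_gammaMeasure {a b r : ℝ} (ha : 0 < a) (hb : 0 < b) (hr : 0 < r) :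
    ((gammaMeasure a r).prod (gammaMeasure b r)).map (fun p => p.1 / (p.1 + p.2)) =
      betaMeasure a b := by
  have := isProbabilityMeasure_gammaMeasure hb hr
  have hmeas_a := measurable_gammaPDF a r
  have hmeas_b := measurable_gammaPDF b r
  refine Measure.ext_of_lintegral _ fun g hg => ?_
  calc
    _ = ∫⁻ x, ∫⁻ y, g (x / (x + y)) ∂gammaMeasure b r ∂gammaMeasure a r := by
      rw [lintegral_map hg (by fun_prop), lintegral_prod _ (by fun_prop)]
    _ = ∫⁻ x in Ioi 0, ∫⁻ t in Ioo 0 1, gammaPDF a r x *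
          (ENNReal.ofReal (x / t ^ 2) * gammaPDF b r (x / t - x)) * g t := by
      rw [lintegral_gammaMeasure a r (Measurable.lintegral_prod_right'
        (f := fun p => g (p.1 / (p.1 + p.2))) (by fun_prop))]
      refine setLIntegral_congr_fun measurableSet_Ioi fun x hx => ?_
      simp only [lintegral_comp_div_add_gammaMeasure b r hx hg, mul_assoc]
      rw [lintegral_const_mul _ (by fun_prop)]
    _ = ∫⁻ t in Ioo 0 1, ∫⁻ x in Ioi 0, gammaPDF a r x *
          (ENNReal.ofReal (x / t ^ 2) * gammaPDF b r (x / t - x)) * g t :=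
      lintegral_lintegral_swap (by unfold Function.uncurry; fun_prop)
    _ = ∫⁻ t in Ioo 0 1, betaPDF a b t * g t := by
      refine setLIntegral_congr_fun measurableSet_Ioo fun t ht => ?_
      rw [lintegral_mul_const _ (by fun_prop), lintegral_gammaPDF_mul_gammaPDF_div_sub ha hb hr ht]
    _ = ∫⁻ t, g t ∂betaMeasure a b := (lintegral_betaMeasure a b hg).symm

theorem hasLaw_div_add_of_gammaMeasure {Ω : Type*} {mΩ : MeasurableSpace Ω} {P : Measure Ω}
    {X Y : Ω → ℝ} {a b r : ℝ} (ha : 0 < a) (hb : 0 < b) (hr : 0 < r)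
    (hX : HasLaw X (gammaMeasure a r) P) (hY : HasLaw Y (gammaMeasure b r) P)
    (hXY : IndepFun X Y P) :
    HasLaw (fun ω => X ω / (X ω + Y ω)) (betaMeasure a b) P := by
  have := isProbabilityMeasure_gammaMeasure ha hr
  have : IsProbabilityMeasure P := hX.isProbabilityMeasure
  exact HasLaw.fun_comp ⟨by fun_prop, map_div_add_prod_gammaMeasure ha hb hr⟩
    ((indepFun_iff_hasLaw_prodMk_prod hX hY).mp hXY)

lemma beta_one_half_left {a : ℝ} (ha : 0 < a) : beta (1 / 2) a = 2 ^ (2 * a - 1) * beta a a := by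
  have hdup := Real.Gamma_mul_Gamma_add_half a
  have hpow : (2 : ℝ) ^ (1 - 2 * a) = (2 ^ (2 * a - 1))⁻¹ := by
    rw [← Real.rpow_neg two_pos.le, neg_sub]
  have hΓhalf : 0 < Real.Gamma (a + 1 / 2) := Real.Gamma_pos_of_pos (by positivity)
  have hΓtwo : 0 < Real.Gamma (2 * a) := Real.Gamma_pos_of_pos (by positivity)
  rw [hpow] at hdup
  rw [beta, beta, Real.Gamma_one_half_eq, add_comm (1 / 2) a, ← two_mul]
  field_simp at hdup ⊢
  linear_combination -hdup

lemma betaPDF_one_sub (a b x : ℝ) : betaPDF a b (1 - x) = betaPDF b a x := by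
  simp only [betaPDF_eq, beta, sub_pos, sub_lt_self_iff, sub_sub_cancel, and_comm, add_comm b a,
    mul_comm, mul_left_comm]

lemma setLIntegral_Ioo_eq_two_mul_of_symm {f : ℝ → ENNReal} (a b : ℝ)
    (hf : ∀ x, f (a + b - x) = f x) :
    ∫⁻ x in Ioo a b, f x = 2 * ∫⁻ x in Ioo ((a + b) / 2) b, f x := by
  rcases le_or_gt b a with hab | hab
  · simp [Ioo_eq_empty, hab.not_gt, show ¬ (a + b) / 2 < b by linarith]
  have hreflect : ∫⁻ x in Ioo a ((a + b) / 2), f x = ∫⁻ x in Ioo ((a + b) / 2) b, f x := by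
    have hmp : MeasurePreserving (fun x : ℝ => a + b - x) := volume.measurePreserving_sub_left _
    rw [← hmp.setLIntegral_comp_preimage_emb (MeasurableEquiv.subLeft (a + b)).measurableEmbedding]
    simp only [preimage_const_sub_Ioo, hf]
    ring_nf
  rw [← Ioo_union_Ico_eq_Ioo (b := (a + b) / 2) (by linarith) (by linarith),
    lintegral_union measurableSet_Ico (Ico_disjoint_Ico_same.mono_left Ioo_subset_Ico_self),
    ← restrict_Ioo_eq_restrict_Ico, hreflect, two_mul]

lemma image_one_add_sqrt_div_two_Ioo : (fun z => (1 + √z) / 2) '' Ioo 0 1 = Ioo (1 / 2) 1 := by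
  ext x
  constructor
  · rintro ⟨z, ⟨hz0, hz1⟩, rfl⟩
    have hpos : 0 < √z := Real.sqrt_pos.mpr hz0
    have hlt : √z < 1 := by rwa [Real.sqrt_lt' one_pos, one_pow]
    constructor <;> linarith
  · rintro ⟨hx0, hx1⟩
    refine ⟨(2 * x - 1) ^ 2, ⟨by nlinarith, by nlinarith⟩, ?_⟩
    simp only [Real.sqrt_sq (show 0 ≤ 2 * x - 1 by linarith)]
    ring

lemma setLIntegral_Ioo_half_one_eq_setLIntegral_Ioo_sqrt (f : ℝ → ENNReal) :
    ∫⁻ x in Ioo (1 / 2) 1, f x =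
      ∫⁻ z in Ioo 0 1, ENNReal.ofReal (1 / (4 * √z)) * f ((1 + √z) / 2) := by
  have hderiv (z : ℝ) (hz : z ∈ Ioo (0 : ℝ) 1) :
      HasDerivWithinAt (fun z => (1 + √z) / 2) (1 / (4 * √z)) (Ioo 0 1) z := by
    have h := ((Real.hasDerivAt_sqrt hz.1.ne').const_add 1).div_const 2
    exact (h.congr_deriv (by ring)).hasDerivWithinAt
  have hmono : MonotoneOn (fun z => (1 + √z) / 2) (Ioo 0 1) := fun y _ z _ hyz => by
    simp only
    gcongr
  rw [← image_one_add_sqrt_div_two_Ioo,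
    lintegral_image_eq_lintegral_deriv_mul_of_monotoneOn measurableSet_Ioo hderiv hmono]

lemma two_mul_betaPDFReal_one_add_sqrt_div_two {a z : ℝ} (ha : 0 < a) (hz : z ∈ Ioo 0 1) :
    2 * (1 / (4 * √z) * betaPDFReal a a ((1 + √z) / 2)) = betaPDFReal (1 / 2) a z := by
  obtain ⟨hz0, hz1⟩ := hz
  have hsqrt0 : 0 < √z := Real.sqrt_pos.mpr hz0
  have hsqrt1 : √z < 1 := by rwa [Real.sqrt_lt' one_pos, one_pow]
  have hprod : ((1 + √z) / 2) ^ (a - 1) * (1 - (1 + √z) / 2) ^ (a - 1) =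
      (1 - z) ^ (a - 1) / 2 ^ (2 * a - 2) := by
    rw [← Real.mul_rpow (by linarith) (by linarith), show 2 * a - 2 = 2 * (a - 1) by ring,
      Real.rpow_mul two_pos.le, ← Real.div_rpow (by linarith) (by positivity)]
    congr 1
    norm_num
    linear_combination (-1 / 4) * Real.sq_sqrt hz0.le
  have hpow : z ^ (1 / 2 - 1 : ℝ) = 1 / √z := by
    rw [show (1 / 2 - 1 : ℝ) = -(1 / 2) by norm_num, Real.rpow_neg hz0.le,
      ← Real.sqrt_eq_rpow, one_div]
  rw [betaPDFReal, if_pos ⟨by linarith, by linarith⟩, betaPDFReal, if_pos ⟨hz0, hz1⟩, hpow,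
    beta_one_half_left ha, mul_assoc (1 / beta a a), hprod,
    show 2 * a - 1 = (2 * a - 2) + 1 by ring, Real.rpow_add_one two_ne_zero]
  field_simp
  norm_num

theorem map_sq_two_mul_sub_one_betaMeasure {a : ℝ} (ha : 0 < a) :
    (betaMeasure a a).map (fun x => (2 * x - 1) ^ 2) = betaMeasure (1 / 2) a := by
  refine Measure.ext_of_lintegral _ fun g hg => ?_
  calc
    _ = ∫⁻ x in Ioo 0 1, betaPDF a a x * g ((2 * x - 1) ^ 2) := by
      rw [lintegral_map hg (by fun_prop), lintegral_betaMeasure a a (by fun_prop)]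
    _ = 2 * ∫⁻ x in Ioo (1 / 2) 1, betaPDF a a x * g ((2 * x - 1) ^ 2) := by
      rw [setLIntegral_Ioo_eq_two_mul_of_symm 0 1, zero_add]
      intro x
      rw [zero_add, betaPDF_one_sub, show 2 * (1 - x) - 1 = -(2 * x - 1) by ring, neg_sq]
    _ = ∫⁻ z in Ioo 0 1, betaPDF (1 / 2) a z * g z := by
      rw [setLIntegral_Ioo_half_one_eq_setLIntegral_Ioo_sqrt, ← lintegral_const_mul' _ _ (by simp)]
      refine setLIntegral_congr_fun measurableSet_Ioo fun z hz => ?_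
      simp only [betaPDF]
      rw [← two_mul_betaPDFReal_one_add_sqrt_div_two ha hz, ENNReal.ofReal_mul two_pos.le,
        ENNReal.ofReal_ofNat, ENNReal.ofReal_mul (by positivity), mul_div_cancel₀ _ two_ne_zero,
        add_sub_cancel_left, Real.sq_sqrt hz.1.le]
      ring
    _ = ∫⁻ z, g z ∂betaMeasure (1 / 2) a := (lintegral_betaMeasure _ _ hg).symm

lemma betaMeasure_one_half_left_eq_withDensity (a : ℝ) :
    betaMeasure (1 / 2) a = (volume.restrict (Ioo 0 1)).withDensity (fun z =>
      ENNReal.ofReal (z ^ (-(1 / 2) : ℝ) * (1 - z) ^ (a - 1) / beta (1 / 2) a)) := by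
  rw [betaMeasure_eq_withDensity_restrict_Ioo]
  refine withDensity_congr_ae (ae_restrict_of_forall_mem measurableSet_Ioo fun z hz => ?_)
  rw [betaPDF_of_pos_lt_one hz.1 hz.2]
  ring_nf

/-- If `X₁, X₂` are i.i.d. `Γ(α, λ)`, then for `n = 2` the statistic
`1/α̂ = S²/X̄² = (X₁ - X₂)²/(X₁ + X₂)²` has the Beta distribution with parameters
`1/2` and `α`, i.e. density `z^{-1/2}(1-z)^{α-1}/B(1/2, α)` on `(0,1)`. -/
theorem inv_momentEstimator_beta_distributed
    {Ω : Type*} [MeasureSpace Ω] [IsProbabilityMeasure (ℙ : Measure Ω)]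
    (α lam : ℝ) (hα : 0 < α) (hlam : 0 < lam)
    (X₁ X₂ : Ω → ℝ) (hX₁m : Measurable X₁) (hX₂m : Measurable X₂)
    (hindep : IndepFun X₁ X₂ ℙ)
    (hX₁ : Measure.map X₁ ℙ = gammaMeasure α (1 / lam))
    (hX₂ : Measure.map X₂ ℙ = gammaMeasure α (1 / lam)) :
    Measure.map (fun ω => (X₁ ω - X₂ ω) ^ 2 / (X₁ ω + X₂ ω) ^ 2) ℙ =
      ((volume : Measure ℝ).restrict (Set.Ioo 0 1)).withDensity (fun z =>
        ENNReal.ofReal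
          (z ^ (-(1 / 2) : ℝ) * (1 - z) ^ (α - 1) /
            (Real.Gamma (1 / 2) * Real.Gamma α / Real.Gamma (1 / 2 + α)))) := by
  have hlaw₁ : HasLaw X₁ (gammaMeasure α (1 / lam)) ℙ := ⟨hX₁m.aemeasurable, hX₁⟩
  have hlaw₂ : HasLaw X₂ (gammaMeasure α (1 / lam)) ℙ := ⟨hX₂m.aemeasurable, hX₂⟩
  have hpos₁ : ∀ᵐ ω, 0 < X₁ ω := (hlaw₁.ae_iff (by fun_prop)).mpr (ae_pos_gammaMeasure _ _)
  have hpos₂ : ∀ᵐ ω, 0 < X₂ ω := (hlaw₂.ae_iff (by fun_prop)).mpr (ae_pos_gammaMeasure _ _)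
  have hsq : HasLaw (fun x : ℝ => (2 * x - 1) ^ 2) (betaMeasure (1 / 2) α) (betaMeasure α α) :=
    ⟨by fun_prop, map_sq_two_mul_sub_one_betaMeasure hα⟩
  have hratio := hsq.fun_comp
    (hasLaw_div_add_of_gammaMeasure hα hα (one_div_pos.mpr hlam) hlaw₁ hlaw₂ hindep)
  have hstat : (fun ω => (X₁ ω - X₂ ω) ^ 2 / (X₁ ω + X₂ ω) ^ 2) =ᵐ[ℙ]
      fun ω => (2 * (X₁ ω / (X₁ ω + X₂ ω)) - 1) ^ 2 := by
    filter_upwards [hpos₁, hpos₂] with ω h₁ h₂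
    field_simp
    ring
  exact (hratio.congr hstat).map_eq.trans (betaMeasure_one_half_left_eq_withDensity α)
end

section
/- For sample size n = 2, the moment estimator α̂ is dispersively increasing in the shape parameter α: for any 0 < α₁ < α₂, the distribution with density f^{α₁}(x) = (1/B(1/2,α₁)) x^{−3/2}(1 − 1/x)^{α₁−1} on (1,∞) is dispersively smaller than the distribution with density f^{α₂}(x) = (1/B(1/2,α₂)) x^{−3/2}(1 − 1/x)^{α₂−1} on (1,∞); that is, if F and G denote the corresponding cumulative distribution functions, then F⁻¹(v) − F⁻¹(u) ≤ G⁻¹(v) − G⁻¹(u) for all 0 < u ≤ v < 1. -/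
/-!
Fix a shift `a ≥ 0`. For `x > 1` the derivative of the likelihood ratio `f₁(x) / f₂(x + a)` has the
sign of a polynomial `A z² + B z + C` in `z = x - 1`, with `A ≤ 0`, `C ≥ 0` if `α₁ ≥ 1`, and
`B ≤ 0` if `α₁ ≤ 1`. In both cases this polynomial, once negative on `z > 0`, stays negative, so the
ratio is unimodal. For `a = 0` the ratio is decreasing.

Let `D(x) = F₁(x) - F₂(x + a)`. If `D` vanishes at some `x > 1`, then, as `D(1) ≤ 0`, the ratio is
at least `1` somewhere before `x`; by unimodality, once it falls below `1` after `x` it remains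
there. Hence `D` is unimodal on `[x, ∞)`, starts from `0` and tends to `0`, so it is nonnegative
there. The same argument on `[1, ∞)` with `a = 0` gives the stochastic order `F₂ ≤ F₁`. Taking
`a = F₂⁻¹(u) - F₁⁻¹(u)`, which is nonnegative by the stochastic order, and `x = F₁⁻¹(u)` turns
`D ≥ 0` into the inequality between quantile differences.
-/

open MeasureTheory

/-- The density of the moment estimator `α̂` for sample size `n = 2` from a gamma
distribution with shape `α`: `f^α(x) = (1/B(1/2,α)) x^{-3/2}(1-1/x)^{α-1}` for `x > 1`,
extended by `0` elsewhere. -/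
noncomputable def alphaHatPDF (α : ℝ) : ℝ → ℝ :=
  Set.indicator (Set.Ioi 1) (fun x =>
    (1 / (Real.Gamma (1 / 2) * Real.Gamma α / Real.Gamma (1 / 2 + α))) *
      x ^ (-(3 / 2) : ℝ) * (1 - 1 / x) ^ (α - 1))

/-- The cumulative distribution function of `α̂` for sample size `n = 2`. -/
noncomputable def alphaHatCDF (α : ℝ) (x : ℝ) : ℝ :=
  ∫ t in Set.Iic x, alphaHatPDF α t

/-- The left-continuous quantile function of `α̂` for sample size `n = 2`. -/
noncomputable def alphaHatQuantile (α : ℝ) (u : ℝ) : ℝ :=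
  sInf {x : ℝ | u ≤ alphaHatCDF α x}

open Set Filter Topology ProbabilityTheory

/-- The left-continuous quantile function of the distribution function `F`. -/
noncomputable def lowerQuantile (F : ℝ → ℝ) (u : ℝ) : ℝ :=
  sInf {x | u ≤ F x}

/-- The dispersive order `X ≤_disp Y`, in terms of the distribution functions `F` of `X` and `G`
of `Y`. -/
def DispersivelyLE (F G : ℝ → ℝ) : Prop :=
  ∀ u v : ℝ, 0 < u → u ≤ v → v < 1 →
    lowerQuantile F v - lowerQuantile F u ≤ lowerQuantile G v - lowerQuantile G u

section Quantile

variable {F G : ℝ → ℝ} {l L u : ℝ}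

lemma isLeast_lowerQuantile (hF : Continuous F) (hbot : Tendsto F atBot (𝓝 l))
    (htop : Tendsto F atTop (𝓝 L)) (hl : l < u) (hL : u < L) :
    IsLeast {x | u ≤ F x} (lowerQuantile F u) := by
  have hne : {x | u ≤ F x}.Nonempty := (htop.eventually_const_le hL).exists
  obtain ⟨m, hm⟩ := eventually_atBot.1 (hbot.eventually_lt_const hl)
  have hbdd : BddBelow {x | u ≤ F x} :=
    ⟨m, fun x hx ↦ le_of_not_ge fun hxm ↦ (hm x hxm).not_ge hx⟩
  exact (isClosed_le continuous_const hF).isLeast_csInf hne hbdd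

lemma apply_lowerQuantile (hF : Continuous F) (hbot : Tendsto F atBot (𝓝 l))
    (htop : Tendsto F atTop (𝓝 L)) (hl : l < u) (hL : u < L) : F (lowerQuantile F u) = u := by
  have hleast := isLeast_lowerQuantile hF hbot htop hl hL
  refine le_antisymm ?_ hleast.1
  have hleft : ∀ᶠ x in 𝓝[<] lowerQuantile F u, F x ≤ u := by
    filter_upwards [self_mem_nhdsWithin] with x hx
    exact (lt_of_not_ge fun hux ↦ (hleast.2 hux).not_gt hx).le
  exact le_of_tendsto hF.continuousWithinAt hleft

lemma dispersivelyLE_of_crossing (hF : Continuous F) (hF₀ : Tendsto F atBot (𝓝 0))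
    (hF₁ : Tendsto F atTop (𝓝 1)) (hG : Continuous G) (hG₀ : Tendsto G atBot (𝓝 0))
    (hG₁ : Tendsto G atTop (𝓝 1)) (hle : ∀ x, G x ≤ F x)
    (hcross : ∀ a x y, 0 ≤ a → 0 < F x → F x = G (x + a) → x ≤ y → G (y + a) ≤ F y) :
    DispersivelyLE F G := by
  intro u v hu huv hv
  have hu1 : u < 1 := huv.trans_lt hv
  have hv0 : 0 < v := hu.trans_le huv
  have hFu : F (lowerQuantile F u) = u := apply_lowerQuantile hF hF₀ hF₁ hu hu1
  have hGu : G (lowerQuantile G u) = u := apply_lowerQuantile hG hG₀ hG₁ hu hu1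
  have hGv : G (lowerQuantile G v) = v := apply_lowerQuantile hG hG₀ hG₁ hv0 hv
  set a := lowerQuantile G u - lowerQuantile F u with ha_def
  have ha : 0 ≤ a := sub_nonneg.2 <|
    (isLeast_lowerQuantile hF hF₀ hF₁ hu hu1).2 (hGu.symm.le.trans (hle _))
  have hmono : lowerQuantile G u ≤ lowerQuantile G v :=
    (isLeast_lowerQuantile hG hG₀ hG₁ hu hu1).2 (huv.trans hGv.symm.le)
  have hshift : v ≤ F (lowerQuantile G v - a) := by
    have h := hcross a (lowerQuantile F u) (lowerQuantile G v - a) ha (by rwa [hFu])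
      (by rw [ha_def, add_sub_cancel, hFu, hGu]) (by linarith)
    rwa [sub_add_cancel, hGv] at h
  have hFv := (isLeast_lowerQuantile hF hF₀ hF₁ hv0 hv).2 hshift
  linarith

end Quantile

section Quasiconcave

variable {𝕜 β : Type*} [Field 𝕜] [LinearOrder 𝕜] [IsStrictOrderedRing 𝕜] [LinearOrder β]

lemma quasiconcaveOn_iff_ordConnected_min_le {s : Set 𝕜} {f : 𝕜 → β} :
    QuasiconcaveOn 𝕜 s f ↔
      s.OrdConnected ∧ ∀ x ∈ s, ∀ z ∈ s, ∀ y ∈ Icc x z, min (f x) (f z) ≤ f y := by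
  constructor
  · intro h
    refine ⟨h.convex.ordConnected, fun x hx z hz y hy ↦ ?_⟩
    exact ((h _).ordConnected.out ⟨hx, min_le_left _ _⟩ ⟨hz, min_le_right _ _⟩ hy).2
  · rintro ⟨hs, h⟩ r
    refine convex_iff_ordConnected.2 ⟨fun x hx z hz y hy ↦ ⟨hs.out hx.1 hz.1 hy, ?_⟩⟩
    exact (le_min hx.2 hz.2).trans (h x hx.1 z hz.1 y hy)

lemma min_le_of_quasiconcaveOn_of_tendsto [TopologicalSpace β] [OrderTopology β] {f : 𝕜 → β}
    {x y : 𝕜} {l : β} (hf : QuasiconcaveOn 𝕜 (Ici x) f) (hl : Tendsto f atTop (𝓝 l))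
    (hxy : x ≤ y) :
    min (f x) l ≤ f y := by
  refine le_of_tendsto (tendsto_const_nhds.min hl) ?_
  filter_upwards [eventually_ge_atTop y] with z hz
  exact (quasiconcaveOn_iff_ordConnected_min_le.1 hf).2 x self_mem_Ici z (hxy.trans hz) y ⟨hxy, hz⟩

lemma quasiconcaveOn_of_hasDerivAt {s : Set ℝ} {f f' : ℝ → ℝ} (hs : s.OrdConnected)
    (hf : ContinuousOn f s) (hf' : ∀ x ∈ interior s, HasDerivAt f (f' x) x)
    (hneg : ∀ p ∈ interior s, ∀ q ∈ interior s, p ≤ q → f' p < 0 → f' q ≤ 0) :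
    QuasiconcaveOn ℝ s f := by
  refine quasiconcaveOn_iff_ordConnected_min_le.2 ⟨hs, fun x hx z hz y hy ↦ ?_⟩
  by_contra! hlt
  obtain ⟨hyx, hyz⟩ := lt_min_iff.1 hlt
  have hxy : x < y := hy.1.lt_of_ne (by rintro rfl; exact hyx.false)
  have hyz' : y < z := hy.2.lt_of_ne (by rintro rfl; exact hyz.false)
  have hys : y ∈ s := hs.out hx hz hy
  have slope {a b : ℝ} (ha : a ∈ s) (hb : b ∈ s) (hab : a < b) :
      ∃ c ∈ Ioo a b, c ∈ interior s ∧ f' c = (f b - f a) / (b - a) := by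
    have hsub : Ioo a b ⊆ interior s :=
      interior_maximal (Ioo_subset_Icc_self.trans (hs.out ha hb)) isOpen_Ioo
    obtain ⟨c, hc, hslope⟩ := exists_hasDerivAt_eq_slope f f' hab (hf.mono (hs.out ha hb))
      fun c hc ↦ hf' c (hsub hc)
    exact ⟨c, hc, hsub hc, hslope⟩
  obtain ⟨p, hp, hps, hp'⟩ := slope hx hys hxy
  obtain ⟨q, hq, hqs, hq'⟩ := slope hys hz hyz'
  have hp_neg : f' p < 0 := hp' ▸ div_neg_of_neg_of_pos (sub_neg.2 hyx) (sub_pos.2 hxy)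
  have hq_pos : 0 < f' q := hq' ▸ div_pos (sub_pos.2 hyz) (sub_pos.2 hyz')
  exact (hneg p hps q hqs (hp.2.trans hq.1).le hp_neg).not_gt hq_pos

end Quasiconcave

/-- The distribution function of the law on `ℝ` with density `f`. -/
noncomputable def densityCDF (f : ℝ → ℝ) (x : ℝ) : ℝ :=
  ∫ t in Iic x, f t

section DensityCDF

variable {f : ℝ → ℝ} {x : ℝ}

lemma continuous_densityCDF (hf : Integrable f) : Continuous (densityCDF f) :=
  continuous_iff_continuousAt.2 fun x ↦
    hf.integrableOn.continuousOn_Iic_primitive_Iic.continuousAt (Iic_mem_nhds (lt_add_one x))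

lemma tendsto_densityCDF_atTop (hf : Integrable f) :
    Tendsto (densityCDF f) atTop (𝓝 (∫ x, f x)) :=
  (aecover_Iic tendsto_id).integral_tendsto_of_countably_generated hf

lemma tendsto_densityCDF_atBot : Tendsto (densityCDF f) atBot (𝓝 0) :=
  tendsto_integral_Iic_zero tendsto_id

lemma hasDerivAt_densityCDF (hf : Integrable f) (hx : ContinuousAt f x) :
    HasDerivAt (densityCDF f) (f x) x := by
  have hsplit : densityCDF f = fun y ↦ densityCDF f x + ∫ t in x..y, f t := by
    ext y
    rw [← intervalIntegral.integral_Iic_sub_Iic hf.integrableOn hf.integrableOn]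
    exact (add_sub_cancel _ _).symm
  rw [hsplit]
  exact (intervalIntegral.integral_hasDerivAt_right hf.intervalIntegrable
    hf.aestronglyMeasurable.stronglyMeasurableAtFilter hx).const_add _

end DensityCDF

/-- `f` is a probability density concentrated on `(c, ∞)`, where it is continuous and positive. -/
structure IsPositiveDensityOnIoi (c : ℝ) (f : ℝ → ℝ) : Prop where
  integrable : Integrable f
  integral_eq_one : ∫ x, f x = 1
  eq_zero : ∀ x ≤ c, f x = 0
  continuousOn : ContinuousOn f (Ioi c)
  pos : ∀ x, c < x → 0 < f x

namespace IsPositiveDensityOnIoi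

variable {c a x y : ℝ} {f g : ℝ → ℝ}

lemma densityCDF_eq_zero (hf : IsPositiveDensityOnIoi c f) (hx : x ≤ c) : densityCDF f x = 0 :=
  setIntegral_eq_zero_of_forall_eq_zero fun t ht ↦ hf.eq_zero t (le_trans ht hx)

lemma densityCDF_nonneg (hf : IsPositiveDensityOnIoi c f) (x : ℝ) : 0 ≤ densityCDF f x :=
  integral_nonneg fun t ↦ (le_or_gt t c).elim (fun h ↦ (hf.eq_zero t h).ge) fun h ↦ (hf.pos t h).le

lemma tendsto_densityCDF (hf : IsPositiveDensityOnIoi c f) :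
    Tendsto (densityCDF f) atTop (𝓝 1) :=
  hf.integral_eq_one ▸ tendsto_densityCDF_atTop hf.integrable

lemma hasDerivAt_densityCDF (hf : IsPositiveDensityOnIoi c f) (hx : c < x) :
    HasDerivAt (densityCDF f) (f x) x :=
  _root_.hasDerivAt_densityCDF hf.integrable (hf.continuousOn.continuousAt (Ioi_mem_nhds hx))

lemma continuous_densityCDF_sub_shift (hf : IsPositiveDensityOnIoi c f)
    (hg : IsPositiveDensityOnIoi c g) (a : ℝ) :
    Continuous fun x ↦ densityCDF f x - densityCDF g (x + a) :=
  (continuous_densityCDF hf.integrable).sub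
    ((continuous_densityCDF hg.integrable).comp (continuous_add_const a))

lemma hasDerivAt_densityCDF_sub_shift (hf : IsPositiveDensityOnIoi c f)
    (hg : IsPositiveDensityOnIoi c g) (ha : 0 ≤ a) (hx : c < x) :
    HasDerivAt (fun x ↦ densityCDF f x - densityCDF g (x + a)) (f x - g (x + a)) x :=
  (hf.hasDerivAt_densityCDF hx).sub
    ((hg.hasDerivAt_densityCDF (by linarith)).comp_add_const x a)

lemma densityCDF_shift_le (hf : IsPositiveDensityOnIoi c f) (hg : IsPositiveDensityOnIoi c g)
    (ha : 0 ≤ a) (hx : c ≤ x) (hxy : x ≤ y) (hFG : densityCDF g (x + a) ≤ densityCDF f x)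
    (hneg : ∀ p q, x < p → p ≤ q → f p < g (p + a) → f q ≤ g (q + a)) :
    densityCDF g (y + a) ≤ densityCDF f y := by
  let D : ℝ → ℝ := fun x ↦ densityCDF f x - densityCDF g (x + a)
  have hD : QuasiconcaveOn ℝ (Ici x) D := by
    refine quasiconcaveOn_of_hasDerivAt (f' := fun x ↦ f x - g (x + a)) ordConnected_Ici
      (hf.continuous_densityCDF_sub_shift hg a).continuousOn ?_ ?_ <;> rw [interior_Ici]
    · exact fun p hp ↦ hf.hasDerivAt_densityCDF_sub_shift hg ha (hx.trans_lt hp)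
    · exact fun p hp q _ hpq h ↦ sub_nonpos.2 (hneg p q hp hpq (sub_neg.1 h))
  have hlim : Tendsto D atTop (𝓝 0) := by
    simpa only [sub_self, D] using! hf.tendsto_densityCDF.sub
      (hg.tendsto_densityCDF.comp (tendsto_atTop_add_const_right atTop a tendsto_id))
  have hmin := min_le_of_quasiconcaveOn_of_tendsto hD hlim hxy
  rw [min_eq_right (sub_nonneg.2 hFG)] at hmin
  exact sub_nonneg.1 hmin

lemma densityCDF_le_of_antitoneOn_ratio (hf : IsPositiveDensityOnIoi c f)
    (hg : IsPositiveDensityOnIoi c g) (hfg : AntitoneOn (fun x ↦ f x / g x) (Ioi c)) (x : ℝ) :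
    densityCDF g x ≤ densityCDF f x := by
  rcases le_total x c with hx | hx
  · rw [hf.densityCDF_eq_zero hx, hg.densityCDF_eq_zero hx]
  have hc : densityCDF g (c + 0) ≤ densityCDF f c := by
    rw [add_zero, hf.densityCDF_eq_zero le_rfl, hg.densityCDF_eq_zero le_rfl]
  simpa only [add_zero] using hf.densityCDF_shift_le hg le_rfl le_rfl hx hc fun p q hp hpq hlt ↦ by
    rw [add_zero] at hlt ⊢
    have hq : c < q := hp.trans_le hpq
    rw [← div_lt_one (hg.pos p hp)] at hlt
    rw [← div_le_one (hg.pos q hq)]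
    exact (hfg hp hq hpq).trans hlt.le

lemma exists_shift_le_of_densityCDF_eq (hf : IsPositiveDensityOnIoi c f)
    (hg : IsPositiveDensityOnIoi c g) (ha : 0 ≤ a) (hx : c < x)
    (hFG : densityCDF f x = densityCDF g (x + a)) : ∃ r ∈ Ioo c x, g (r + a) ≤ f r := by
  obtain ⟨r, hr, hslope⟩ := exists_hasDerivAt_eq_slope
    (fun x ↦ densityCDF f x - densityCDF g (x + a)) (fun x ↦ f x - g (x + a)) hx
    (hf.continuous_densityCDF_sub_shift hg a).continuousOn
    fun r hr ↦ hf.hasDerivAt_densityCDF_sub_shift hg ha hr.1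
  refine ⟨r, hr, sub_nonneg.1 ?_⟩
  rw [hslope, hFG, hf.densityCDF_eq_zero le_rfl, sub_self, zero_sub, zero_sub, neg_neg]
  exact div_nonneg (hg.densityCDF_nonneg _) (sub_pos.2 hx).le

theorem dispersivelyLE_of_quasiconcaveOn_ratio (hf : IsPositiveDensityOnIoi c f)
    (hg : IsPositiveDensityOnIoi c g) (hle : ∀ x, densityCDF g x ≤ densityCDF f x)
    (hratio : ∀ a, 0 ≤ a → QuasiconcaveOn ℝ (Ioi c) fun x ↦ f x / g (x + a)) :
    DispersivelyLE (densityCDF f) (densityCDF g) := by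
  refine dispersivelyLE_of_crossing (continuous_densityCDF hf.integrable) tendsto_densityCDF_atBot
    hf.tendsto_densityCDF (continuous_densityCDF hg.integrable) tendsto_densityCDF_atBot
    hg.tendsto_densityCDF hle fun a x y ha hFx hFG hxy ↦ ?_
  have hx : c < x := lt_of_not_ge fun h ↦ hFx.ne' (hf.densityCDF_eq_zero h)
  obtain ⟨r, hr, hgr⟩ := hf.exists_shift_le_of_densityCDF_eq hg ha hx hFG
  refine hf.densityCDF_shift_le hg ha hx.le hxy hFG.ge fun p q hp hpq hlt ↦ ?_
  have hg_pos {t : ℝ} (ht : c < t) : 0 < g (t + a) := hg.pos _ (by linarith)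
  have hrp : r < p := hr.2.trans hp
  have hcp : c < p := hx.trans hp
  have hcq : c < q := hcp.trans_le hpq
  have hmin : min (f r / g (r + a)) (f q / g (q + a)) ≤ f p / g (p + a) :=
    (quasiconcaveOn_iff_ordConnected_min_le.1 (hratio a ha)).2 r hr.1 q hcq p ⟨hrp.le, hpq⟩
  have hr_ratio : 1 ≤ f r / g (r + a) := (one_le_div (hg_pos hr.1)).2 hgr
  have hp_ratio : f p / g (p + a) < 1 := (div_lt_one (hg_pos hcp)).2 hlt
  have hq_ratio : f q / g (q + a) < 1 :=
    ((min_lt_iff.1 (hmin.trans_lt hp_ratio)).resolve_left hr_ratio.not_gt)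
  exact ((div_lt_one (hg_pos hcq)).1 hq_ratio).le

end IsPositiveDensityOnIoi

lemma quadratic_neg_of_neg {𝕜 : Type*} [CommRing 𝕜] [LinearOrder 𝕜] [IsStrictOrderedRing 𝕜]
    {A B C s t : 𝕜} (hA : A ≤ 0) (hBC : 0 ≤ C ∨ B ≤ 0) (hs : 0 < s) (hst : s ≤ t)
    (hneg : A * s ^ 2 + B * s + C < 0) : A * t ^ 2 + B * t + C < 0 := by
  have hts : 0 ≤ t - s := sub_nonneg.2 hst
  have ht : 0 < t := hs.trans_le hst
  rcases hBC with hC | hB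
  -- After clearing denominators: `z ↦ A * z + B + C / z` is antitone on `(0, ∞)`.
  · have hscaled : s * (A * t ^ 2 + B * t + C) < 0 := by
      calc s * (A * t ^ 2 + B * t + C)
          = t * (A * s ^ 2 + B * s + C) + A * (s * t * (t - s)) - C * (t - s) := by ring
        _ ≤ t * (A * s ^ 2 + B * s + C) := by
          have h₁ := mul_nonpos_of_nonpos_of_nonneg hA (by positivity : 0 ≤ s * t * (t - s))
          have h₂ := mul_nonneg hC hts
          linarith
        _ < 0 := mul_neg_of_pos_of_neg ht hneg
    exact neg_of_mul_neg_right hscaled hs.le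
  · calc A * t ^ 2 + B * t + C ≤ A * s ^ 2 + B * s + C := by
          have h₁ := mul_le_mul_of_nonpos_left (pow_le_pow_left₀ hs.le hst 2) hA
          have h₂ := mul_le_mul_of_nonpos_left hst hB
          linarith
      _ < 0 := hneg

section BetaDensity

variable {a b : ℝ}

lemma betaPDFReal_nonneg (ha : 0 < a) (hb : 0 < b) (x : ℝ) : 0 ≤ betaPDFReal a b x := by
  by_cases hx : 0 < x ∧ x < 1
  · exact (betaPDFReal_pos hx.1 hx.2 ha hb).le
  · exact (if_neg hx).ge

lemma integrable_betaPDFReal (ha : 0 < a) (hb : 0 < b) : Integrable (betaPDFReal a b) := by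
  refine (lintegral_ofReal_ne_top_iff_integrable (by fun_prop)
    (ae_of_all _ (betaPDFReal_nonneg ha hb))).1 ?_
  exact (lintegral_betaPDF_eq_one ha hb).trans_ne ENNReal.one_ne_top

lemma integral_betaPDFReal (ha : 0 < a) (hb : 0 < b) : ∫ x, betaPDFReal a b x = 1 := by
  rw [integral_eq_lintegral_of_nonneg_ae (ae_of_all _ (betaPDFReal_nonneg ha hb)) (by fun_prop)]
  exact congrArg ENNReal.toReal (lintegral_betaPDF_eq_one ha hb)

end BetaDensity

/-- The density of the reciprocal of a `Beta(b, α)` random variable. -/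
noncomputable def invBetaPDF (b α : ℝ) : ℝ → ℝ :=
  (Ioi 1).indicator fun x ↦ (1 / beta b α) * x ^ (-(b + 1)) * (1 - 1 / x) ^ (α - 1)

lemma alphaHatPDF_eq_invBetaPDF (α : ℝ) : alphaHatPDF α = invBetaPDF (1 / 2) α := by
  rw [alphaHatPDF, invBetaPDF, beta, show (1 / 2 + 1 : ℝ) = 3 / 2 by norm_num]

section InvBeta

variable {a b α β x : ℝ}

lemma one_sub_one_div_pos (hx : 1 < x) : 0 < 1 - 1 / x :=
  sub_pos.2 ((div_lt_one (by linarith)).2 hx)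

lemma invBetaPDF_of_one_lt (b α : ℝ) (hx : 1 < x) :
    invBetaPDF b α x = (1 / beta b α) * x ^ (-(b + 1)) * (1 - 1 / x) ^ (α - 1) :=
  indicator_of_mem (mem_Ioi.2 hx) _

lemma invBetaPDF_of_le_one (b α : ℝ) (hx : x ≤ 1) : invBetaPDF b α x = 0 :=
  indicator_of_notMem (notMem_Ioi.2 hx) _

lemma invBetaPDF_pos (hb : 0 < b) (hα : 0 < α) (hx : 1 < x) : 0 < invBetaPDF b α x := by
  rw [invBetaPDF_of_one_lt b α hx]
  have hx_pow : 0 < x ^ (-(b + 1)) := Real.rpow_pos_of_pos (by linarith) _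
  exact mul_pos (mul_pos (one_div_pos.2 (beta_pos hb hα)) hx_pow)
    (Real.rpow_pos_of_pos (one_sub_one_div_pos hx) _)

-- The left side is the integrand produced by the substitution `x ↦ x ^ (-1)`.
lemma smul_betaPDFReal_rpow_neg_one (b α : ℝ) (hx : 0 < x) :
    (|(-1 : ℝ)| * x ^ (-1 - 1 : ℝ)) • betaPDFReal b α (x ^ (-1 : ℝ)) = invBetaPDF b α x := by
  rw [abs_neg, abs_one, one_mul, smul_eq_mul, betaPDFReal, Real.rpow_neg_one]
  rcases le_or_gt x 1 with hx1 | hx1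
  · rw [if_neg fun h ↦ ((one_le_inv₀ hx).2 hx1).not_gt h.2, mul_zero, invBetaPDF_of_le_one b α hx1]
  · have hexp : x ^ (-(b + 1)) = x ^ (-1 - 1 : ℝ) * x ^ (-(b - 1)) := by
      rw [← Real.rpow_add hx]
      congr 1
      ring
    rw [if_pos ⟨inv_pos.2 hx, inv_lt_one_of_one_lt₀ hx1⟩, invBetaPDF_of_one_lt b α hx1, hexp,
      Real.inv_rpow hx.le, ← Real.rpow_neg hx.le, one_div x]
    ring

lemma integrable_invBetaPDF (hb : 0 < b) (hα : 0 < α) : Integrable (invBetaPDF b α) := by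
  have hIoi : IntegrableOn (invBetaPDF b α) (Ioi 0) :=
    ((integrableOn_Ioi_comp_rpow_iff _ (neg_ne_zero.2 one_ne_zero)).2
      (integrable_betaPDFReal hb hα).integrableOn).congr_fun
        (fun x hx ↦ smul_betaPDFReal_rpow_neg_one b α hx) measurableSet_Ioi
  refine (integrableOn_iff_integrable_of_support_subset fun x hx ↦ ?_).1 hIoi
  by_contra h
  exact hx (invBetaPDF_of_le_one b α ((notMem_Ioi.1 h).trans zero_le_one))

lemma integral_invBetaPDF (hb : 0 < b) (hα : 0 < α) : ∫ x, invBetaPDF b α x = 1 := by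
  calc ∫ x, invBetaPDF b α x = ∫ x in Ioi 0, invBetaPDF b α x := by
        refine (setIntegral_eq_integral_of_forall_compl_eq_zero fun x hx ↦ ?_).symm
        exact invBetaPDF_of_le_one b α ((notMem_Ioi.1 hx).trans zero_le_one)
    _ = ∫ x in Ioi 0, (|(-1 : ℝ)| * x ^ (-1 - 1 : ℝ)) • betaPDFReal b α (x ^ (-1 : ℝ)) :=
        setIntegral_congr_fun measurableSet_Ioi fun x hx ↦
          (smul_betaPDFReal_rpow_neg_one b α hx).symm
    _ = ∫ y in Ioi 0, betaPDFReal b α y := integral_comp_rpow_Ioi _ (neg_ne_zero.2 one_ne_zero)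
    _ = ∫ y, betaPDFReal b α y := setIntegral_eq_integral_of_forall_compl_eq_zero fun y hy ↦
        if_neg fun h ↦ hy h.1
    _ = 1 := integral_betaPDFReal hb hα

/-- The logarithmic derivative of `invBetaPDF b α` on `(1, ∞)`. -/
noncomputable def invBetaLogDeriv (b α x : ℝ) : ℝ :=
  (α - 1) / (x - 1) - (α + b) / x

lemma hasDerivAt_invBetaPDF (b α : ℝ) (hx : 1 < x) :
    HasDerivAt (invBetaPDF b α) (invBetaPDF b α x * invBetaLogDeriv b α x) x := by
  have hx0 : x ≠ 0 := by linarith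
  have hx1 : x - 1 ≠ 0 := by linarith
  have hbase : 1 - 1 / x ≠ 0 := (one_sub_one_div_pos hx).ne'
  have hpow := (Real.hasDerivAt_rpow_const (p := -(b + 1)) (Or.inl hx0)).const_mul (1 / beta b α)
  have hsub : HasDerivAt (fun y : ℝ ↦ 1 - 1 / y) ((x ^ 2)⁻¹) x := by
    simpa only [one_div, neg_neg] using (hasDerivAt_inv hx0).const_sub 1
  have hprod := hpow.mul (hsub.rpow_const (p := α - 1) (Or.inl hbase))
  refine (hprod.congr_of_eventuallyEq ?_).congr_deriv ?_
  · filter_upwards [Ioi_mem_nhds hx] with y hy using invBetaPDF_of_one_lt b α hy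
  · rw [invBetaPDF_of_one_lt b α hx, invBetaLogDeriv, Real.rpow_sub_one hx0,
      Real.rpow_sub_one hbase (α - 1)]
    have hfrac : 1 - 1 / x = (x - 1) / x := by field_simp
    generalize (1 - 1 / x) ^ (α - 1) = w
    rw [hfrac]
    field_simp
    ring

lemma isPositiveDensityOnIoi_invBetaPDF (hb : 0 < b) (hα : 0 < α) :
    IsPositiveDensityOnIoi 1 (invBetaPDF b α) where
  integrable := integrable_invBetaPDF hb hα
  integral_eq_one := integral_invBetaPDF hb hα
  eq_zero _ hx := invBetaPDF_of_le_one b α hx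
  continuousOn _ hx := (hasDerivAt_invBetaPDF b α hx).continuousAt.continuousWithinAt
  pos _ hx := invBetaPDF_pos hb hα hx

lemma hasDerivAt_invBetaPDF_ratio (hb : 0 < b) (hβ : 0 < β) (ha : 0 ≤ a) (hx : 1 < x) :
    HasDerivAt (fun x ↦ invBetaPDF b α x / invBetaPDF b β (x + a))
      (invBetaPDF b α x / invBetaPDF b β (x + a) *
        (invBetaLogDeriv b α x - invBetaLogDeriv b β (x + a))) x := by
  have hxa : 1 < x + a := by linarith
  have hne : invBetaPDF b β (x + a) ≠ 0 := (invBetaPDF_pos hb hβ hxa).ne'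
  refine ((hasDerivAt_invBetaPDF b α hx).div
    ((hasDerivAt_invBetaPDF b β hxa).comp_add_const x a) hne).congr_deriv ?_
  field_simp

lemma antitoneOn_invBetaPDF_ratio (hb : 0 < b) (hα : 0 < α) (hαβ : α ≤ β) :
    AntitoneOn (fun x ↦ invBetaPDF b α x / invBetaPDF b β x) (Ioi 1) := by
  have hβ : 0 < β := hα.trans_le hαβ
  have hderiv : ∀ x ∈ Ioi (1 : ℝ), HasDerivAt (fun x ↦ invBetaPDF b α x / invBetaPDF b β x) _ x :=
    fun x hx ↦ by simpa only [add_zero] using hasDerivAt_invBetaPDF_ratio hb hβ le_rfl hx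
  refine antitoneOn_of_hasDerivWithinAt_nonpos (convex_Ioi 1)
    (fun x hx ↦ (hderiv x hx).continuousAt.continuousWithinAt)
    (fun x hx ↦ (hderiv x (interior_subset hx)).hasDerivWithinAt) fun x hx ↦ ?_
  have hx : 1 < x := interior_subset hx
  have hx1 : 0 < x - 1 := by linarith
  have hdiff : invBetaLogDeriv b α x - invBetaLogDeriv b β x = -((β - α) / ((x - 1) * x)) := by
    unfold invBetaLogDeriv
    field_simp
    ring
  rw [hdiff]
  refine mul_nonpos_of_nonneg_of_nonpos
    (div_pos (invBetaPDF_pos hb hα hx) (invBetaPDF_pos hb hβ hx)).le ?_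
  exact neg_nonpos.2 (div_nonneg (sub_nonneg.2 hαβ) (by positivity))

lemma invBetaLogDeriv_sub_shift (ha : 0 ≤ a) (hx : 1 < x) :
    invBetaLogDeriv b α x - invBetaLogDeriv b β (x + a) =
      ((α - β - (b + 1) * a) * (x - 1) ^ 2
          + (α - β + 2 * a * (α - 1) - (b + 1) * a ^ 2) * (x - 1) + (α - 1) * a * (1 + a)) /
        ((x - 1) * x * ((x + a - 1) * (x + a))) := by
  have h₁ : x - 1 ≠ 0 := by linarith
  have h₂ : x ≠ 0 := by linarith
  have h₃ : x + a - 1 ≠ 0 := by linarith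
  have h₄ : x + a ≠ 0 := by linarith
  unfold invBetaLogDeriv
  field_simp
  ring

lemma invBetaLogDeriv_sub_shift_neg_of_neg {p q : ℝ} (hb : 0 < b) (hαβ : α ≤ β) (ha : 0 ≤ a)
    (hp : 1 < p) (hpq : p ≤ q)
    (hneg : invBetaLogDeriv b α p - invBetaLogDeriv b β (p + a) < 0) :
    invBetaLogDeriv b α q - invBetaLogDeriv b β (q + a) < 0 := by
  have hden {x : ℝ} (hx : 1 < x) : 0 < (x - 1) * x * ((x + a - 1) * (x + a)) :=
    mul_pos (mul_pos (by linarith) (by linarith)) (mul_pos (by linarith) (by linarith))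
  have hA : α - β - (b + 1) * a ≤ 0 := by
    have : 0 ≤ (b + 1) * a := by positivity
    linarith
  have hBC : 0 ≤ (α - 1) * a * (1 + a) ∨ α - β + 2 * a * (α - 1) - (b + 1) * a ^ 2 ≤ 0 := by
    rcases le_total 1 α with h | h
    · have : 0 ≤ α - 1 := sub_nonneg.2 h
      exact Or.inl (by positivity)
    · have h₁ : a * (α - 1) ≤ 0 := mul_nonpos_of_nonneg_of_nonpos ha (sub_nonpos.2 h)
      have h₂ : 0 ≤ (b + 1) * a ^ 2 := by positivity
      exact Or.inr (by linarith)
  have hq : 1 < q := hp.trans_le hpq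
  rw [invBetaLogDeriv_sub_shift ha hp, div_lt_iff₀ (hden hp), zero_mul] at hneg
  rw [invBetaLogDeriv_sub_shift ha hq, div_lt_iff₀ (hden hq), zero_mul]
  exact quadratic_neg_of_neg hA hBC (sub_pos.2 hp) (sub_le_sub_right hpq 1) hneg

lemma quasiconcaveOn_invBetaPDF_ratio (hb : 0 < b) (hα : 0 < α) (hαβ : α ≤ β) (ha : 0 ≤ a) :
    QuasiconcaveOn ℝ (Ioi 1) fun x ↦ invBetaPDF b α x / invBetaPDF b β (x + a) := by
  have hβ : 0 < β := hα.trans_le hαβ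
  have hderiv := fun x (hx : x ∈ Ioi (1 : ℝ)) ↦
    hasDerivAt_invBetaPDF_ratio (α := α) hb hβ ha hx
  have hratio {x : ℝ} (hx : 1 < x) : 0 < invBetaPDF b α x / invBetaPDF b β (x + a) :=
    div_pos (invBetaPDF_pos hb hα hx) (invBetaPDF_pos hb hβ (by linarith))
  refine quasiconcaveOn_of_hasDerivAt ordConnected_Ioi
    (fun x hx ↦ (hderiv x hx).continuousAt.continuousWithinAt)
    (fun x hx ↦ hderiv x (interior_subset hx)) fun p hp q hq hpq hneg ↦ ?_
  replace hp : 1 < p := interior_subset hp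
  replace hq : 1 < q := interior_subset hq
  have hlog := neg_of_mul_neg_right hneg (hratio hp).le
  exact mul_nonpos_of_nonneg_of_nonpos (hratio hq).le
    (invBetaLogDeriv_sub_shift_neg_of_neg hb hαβ ha hp hpq hlog).le

end InvBeta

theorem momentEstimator_dispersively_increasing_general {b α β : ℝ} (hb : 0 < b) (hα : 0 < α)
    (hαβ : α ≤ β) :
    DispersivelyLE (densityCDF (invBetaPDF b α)) (densityCDF (invBetaPDF b β)) := by
  have hf := isPositiveDensityOnIoi_invBetaPDF hb hα
  have hg := isPositiveDensityOnIoi_invBetaPDF hb (hα.trans_le hαβ)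
  have hle := hf.densityCDF_le_of_antitoneOn_ratio hg (antitoneOn_invBetaPDF_ratio hb hα hαβ)
  exact hf.dispersivelyLE_of_quasiconcaveOn_ratio hg hle fun _ ha ↦
    quasiconcaveOn_invBetaPDF_ratio hb hα hαβ ha

/-- For `n = 2`, the moment estimator `α̂` is dispersively increasing in
the shape parameter `α`: for `0 < α₁ < α₂` the distribution of `α̂` under shape `α₁` is
dispersively smaller than under shape `α₂`. -/
theorem momentEstimator_dispersively_increasing
    (α₁ α₂ : ℝ) (hα₁ : 0 < α₁) (hα : α₁ < α₂) :
    ∀ u v : ℝ, 0 < u → u ≤ v → v < 1 →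
      alphaHatQuantile α₁ v - alphaHatQuantile α₁ u ≤
        alphaHatQuantile α₂ v - alphaHatQuantile α₂ u := by
  have h := momentEstimator_dispersively_increasing_general one_half_pos hα₁ hα.le
  rwa [← alphaHatPDF_eq_invBetaPDF, ← alphaHatPDF_eq_invBetaPDF] at h
end
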